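/- arXiv:1502.03740 — 2 statements merged into one kernel-verified Lean document; each statement's English description precedes it below -/
import Mathlib

section
/- Let I, J ⊆ ℝ be intervals, E a Banach space, y : J → E locally essentially bounded and Bochner measurable, and f : I → ℝ locally absolutely continuous with f(I) ⊆ J. Then the function t ↦ f'(t) · y(f(t)) is locally Bochner integrable on I, and for all s, t ∈ I, ∫_s^t f'(λ) y(f(λ)) dλ = ∫_{f(s)}^{f(t)} y(λ) dλ. -/
open MeasureTheory Set intervalIntegral

/-- `f` is absolutely continuous on the set `s`: for every `ε > 0` there is `δ > 0` such
that for every finite family of non-overlapping subintervals of `s` of total length `< δ`,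
the total variation of `f` over them is `< ε`. -/
def AbsolutelyContinuousOn (f : ℝ → ℝ) (s : Set ℝ) : Prop :=
  ∀ ε > (0 : ℝ), ∃ δ > (0 : ℝ), ∀ n : ℕ, ∀ u v : ℕ → ℝ,
    (∀ i < n, u i ∈ s ∧ v i ∈ s ∧ u i ≤ v i) →
    (∀ i < n, ∀ j < n, i ≠ j → Set.Ioo (u i) (v i) ∩ Set.Ioo (u j) (v j) = ∅) →
    (∑ i ∈ Finset.range n, (v i - u i)) < δ →
    (∑ i ∈ Finset.range n, |f (v i) - f (u i)|) < ε

/-- `f` is locally absolutely continuous on the interval `I`: absolutely continuous on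
every compact subinterval of `I`. -/
def LocallyAbsolutelyContinuousOn (f : ℝ → ℝ) (I : Set ℝ) : Prop :=
  ∀ a ∈ I, ∀ b ∈ I, AbsolutelyContinuousOn f (Set.Icc a b)

/-- `f'` is the derivative of `f` relative to `I`, in the convention of the paper:
it is the derivative at points of differentiability and `0` elsewhere. -/
def IsDerivWithinOf (f' f : ℝ → ℝ) (I : Set ℝ) : Prop :=
  ∀ t ∈ I, (DifferentiableWithinAt ℝ f I t → HasDerivWithinAt f (f' t) I t) ∧
    (¬ DifferentiableWithinAt ℝ f I t → f' t = 0)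

/-- `y ∈ L^∞_loc(J; E)`: `y` is Bochner measurable on `J` and essentially bounded on
every compact subinterval of `J`. -/
def LocEssBdd {E : Type*} [NormedAddCommGroup E] (y : ℝ → E) (J : Set ℝ) : Prop :=
  AEStronglyMeasurable y (volume.restrict J) ∧
  ∀ a ∈ J, ∀ b ∈ J, ∃ M : ℝ, ∀ᵐ t ∂(volume.restrict (Set.uIcc a b)), ‖y t‖ ≤ M

/-!
Let `F` be the primitive of `y`. It is Lipschitz, so `F ∘ f` is absolutely continuous, and the
theorem is the fundamental theorem of calculus for `F ∘ f` once the chain rule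
`(F ∘ f)' = f' • (y ∘ f)` is known almost everywhere. The obstacle is that `f` may map a set of
positive measure into the null set `N` where `F' = y` fails. But a set on which `f' ≠ 0` cannot be
mapped onto a null set unless it is null itself, so `f' = 0` almost everywhere on `f ⁻¹' N`, and
there the Lipschitz bound on `F` makes both sides of the chain rule vanish. The same fact shows that
`f' • (y ∘ f)` depends, up to null sets, only on the almost everywhere class of `y`.
-/

open Filter
open scoped Topology NNReal ENNReal

section NonsingularDerivative

variable {E : Type*} [NormedAddCommGroup E] [NormedSpace ℝ E] [FiniteDimensional ℝ E]
  [MeasurableSpace E] [BorelSpace E] (μ : Measure E) [μ.IsAddHaarMeasure]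

theorem eventually_addHaar_eq_zero_of_approximatesLinearOn {A : E →L[ℝ] E} (hA : A.det ≠ 0) :
    ∀ᶠ δ in 𝓝[>] (0 : ℝ≥0), ∀ (s : Set E) (f : E → E),
      ApproximatesLinearOn f A s δ → μ (f '' s) = 0 → μ s = 0 := by
  obtain ⟨m, hm_pos, hm⟩ : ∃ m : ℝ≥0, 0 < (m : ℝ≥0∞) ∧ (m : ℝ≥0∞) < ENNReal.ofReal |A.det| :=
    ENNReal.lt_iff_exists_nnreal_btwn.1 (ENNReal.ofReal_pos.2 (abs_pos.2 hA))
  filter_upwards [mul_le_addHaar_image_of_lt_det μ A hm] with δ hδ s f hf hs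
  have hmul : (m : ℝ≥0∞) * μ s = 0 := le_antisymm ((hδ s f hf).trans_eq hs) zero_le
  exact (mul_eq_zero.1 hmul).resolve_left hm_pos.ne'

theorem addHaar_eq_zero_of_addHaar_image_eq_zero {f : E → E} {f' : E → E →L[ℝ] E} {s : Set E}
    (hf : ∀ x ∈ s, HasFDerivWithinAt f (f' x) s x) (hdet : ∀ x ∈ s, (f' x).det ≠ 0)
    (himage : μ (f '' s) = 0) : μ s = 0 := by
  -- Countably many pieces cover `s` on each of which `f` is so close to an invertible linear map
  -- that volume shrinks by at most a constant factor.
  have exists_precision (A : E →L[ℝ] E) : ∃ r : ℝ≥0, r ≠ 0 ∧ (A.det ≠ 0 →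
      ∀ u : Set E, ApproximatesLinearOn f A u r → μ (f '' u) = 0 → μ u = 0) := by
    by_cases hA : A.det = 0
    · exact ⟨1, one_ne_zero, fun h => absurd hA h⟩
    · obtain ⟨r, hr, hr_pos⟩ := ((eventually_addHaar_eq_zero_of_approximatesLinearOn μ hA).and
        self_mem_nhdsWithin).exists
      exact ⟨r, ne_of_gt hr_pos, fun _ u => hr u f⟩
  choose r hr_ne hr using exists_precision
  obtain ⟨t, A, -, hcover, happrox, hA⟩ :=
    exists_closed_cover_approximatesLinearOn_of_hasFDerivWithinAt f s f' hf r hr_ne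
  rcases s.eq_empty_or_nonempty with rfl | hs
  · exact measure_empty
  have hpiece (n : ℕ) : μ (s ∩ t n) = 0 := by
    obtain ⟨x, hx, hAx⟩ := hA hs n
    exact hr (A n) (hAx ▸ hdet x hx) _ (happrox n)
      (measure_mono_null (image_mono inter_subset_left) himage)
  rw [← inter_eq_left.2 hcover, inter_iUnion]
  exact measure_iUnion_null hpiece

end NonsingularDerivative

theorem ae_comp_of_deriv_ne_zero {p : ℝ → Prop} (hp : ∀ᵐ u, p u) (f : ℝ → ℝ) :
    ∀ᵐ t, deriv f t ≠ 0 → p (f t) := by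
  suffices h : volume {t | deriv f t ≠ 0 ∧ ¬p (f t)} = 0 by
    simpa only [ae_iff, Classical.not_imp] using h
  refine addHaar_eq_zero_of_addHaar_image_eq_zero volume (f := f)
    (f' := fun t => ContinuousLinearMap.toSpanSingleton ℝ (deriv f t)) ?_ ?_ ?_
  · intro t ht
    exact (differentiableAt_of_deriv_ne_zero ht.1).hasDerivAt.hasFDerivAt.hasFDerivWithinAt
  · intro t ht
    simpa using ht.1
  · refine measure_mono_null ?_ (ae_iff.1 hp)
    rintro _ ⟨t, ht, rfl⟩
    exact ht.2

section ChainRule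

variable {E : Type*} [NormedAddCommGroup E] [NormedSpace ℝ E]

theorem hasDerivAt_comp_zero_of_lipschitzWith {F : ℝ → E} {K : ℝ≥0} (hF : LipschitzWith K F)
    {f : ℝ → ℝ} {t : ℝ} (hf : HasDerivAt f 0 t) : HasDerivAt (F ∘ f) 0 t := by
  rw [hasDerivAt_iff_isLittleO] at hf ⊢
  simp only [smul_zero, sub_zero] at hf ⊢
  exact (Asymptotics.isBigO_of_le' _ fun x => hF.norm_sub_le (f x) (f t)).trans_isLittleO hf

theorem ae_hasDerivAt_comp_of_lipschitzWith {F g : ℝ → E} {K : ℝ≥0} (hF : LipschitzWith K F)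
    (hFg : ∀ᵐ u, HasDerivAt F (g u) u) (f : ℝ → ℝ) :
    ∀ᵐ t, DifferentiableAt ℝ f t → HasDerivAt (F ∘ f) (deriv f t • g (f t)) t := by
  filter_upwards [ae_comp_of_deriv_ne_zero hFg f] with t hFt hft
  by_cases h : deriv f t = 0
  · have hft_zero : HasDerivAt f 0 t := h ▸ hft.hasDerivAt
    simpa only [h, zero_smul] using hasDerivAt_comp_zero_of_lipschitzWith hF hft_zero
  · exact (hFt h).scomp t hft.hasDerivAt

end ChainRule

theorem absolutelyContinuousOnInterval_comp_of_lipschitzWith {X Y : Type*} [PseudoMetricSpace X]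
    [PseudoMetricSpace Y] {F : X → Y} {K : ℝ≥0} (hF : LipschitzWith K F) {f : ℝ → X} {a b : ℝ}
    (hf : AbsolutelyContinuousOnInterval f a b) : AbsolutelyContinuousOnInterval (F ∘ f) a b := by
  refine squeeze_zero (fun _ => Finset.sum_nonneg fun _ _ => dist_nonneg) (fun _ => ?_)
    (by simpa only [mul_zero] using Tendsto.const_mul (K : ℝ) hf)
  rw [Finset.mul_sum]
  exact Finset.sum_le_sum fun _ _ => hF.dist_le_mul _ _

theorem exists_ae_norm_le_of_memLp_top {α G : Type*} [MeasurableSpace α] [NormedAddCommGroup G]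
    {μ : Measure α} {g : α → G} (hg : MemLp g ∞ μ) : ∃ C : ℝ≥0, ∀ᵐ x ∂μ, ‖g x‖ ≤ C := by
  refine ⟨(eLpNorm g ∞ μ).toNNReal, ?_⟩
  filter_upwards [ae_le_eLpNormEssSup (f := g) (μ := μ)] with x hx
  rw [← eLpNorm_exponent_top, ← ENNReal.coe_toNNReal hg.eLpNorm_ne_top, ← ofReal_norm] at hx
  exact Real.toNNReal_le_iff_le_coe.1 (ENNReal.coe_le_coe.1 hx)

theorem memLp_indicator_image_uIcc {G : Type*} [NormedAddCommGroup G] {p : ℝ≥0∞} {f : ℝ → ℝ}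
    {a b : ℝ} (hf : ContinuousOn f (uIcc a b)) {y : ℝ → G}
    (hy : MemLp y p (volume.restrict (f '' uIcc a b))) :
    MemLp ((f '' uIcc a b).indicator y) p volume :=
  (memLp_indicator_iff_restrict (isCompact_uIcc.image_of_continuousOn hf).measurableSet).2 hy

section ChangeOfVariables

variable {E : Type*} [NormedAddCommGroup E] [NormedSpace ℝ E]

theorem integral_eq_sub_of_absolutelyContinuousOnInterval [CompleteSpace E] {F F' : ℝ → E}
    {a b : ℝ} (hF : AbsolutelyContinuousOnInterval F a b)
    (hderiv : ∀ᵐ t, t ∈ uIcc a b → HasDerivAt F (F' t) t)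
    (hF' : IntervalIntegrable F' volume a b) : ∫ t in a..b, F' t = F b - F a := by
  refine (SeparatingDual.eq_iff_forall_dual_eq (R := ℝ)).2 fun φ => ?_
  have hφF : ∀ᵐ t, t ∈ uIoc a b → φ (F' t) = deriv (φ ∘ F) t := by
    filter_upwards [hderiv] with t ht hmem
    exact (φ.hasFDerivAt.comp_hasDerivAt t (ht (uIoc_subset_uIcc hmem))).deriv.symm
  calc φ (∫ t in a..b, F' t) = ∫ t in a..b, φ (F' t) := (φ.intervalIntegral_comp_comm hF').symm
    _ = ∫ t in a..b, deriv (φ ∘ F) t := integral_congr_ae hφF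
    _ = φ (F b) - φ (F a) :=
      (absolutelyContinuousOnInterval_comp_of_lipschitzWith φ.lipschitz hF).integral_deriv_eq_sub
    _ = φ (F b - F a) := (map_sub φ _ _).symm

theorem exists_lipschitzWith_integral_of_memLp_top {g : ℝ → E} (hg : MemLp g ∞ volume) (c : ℝ) :
    ∃ K, LipschitzWith K fun u => ∫ x in c..u, g x := by
  obtain ⟨C, hC⟩ := exists_ae_norm_le_of_memLp_top hg
  refine ⟨C, LipschitzWith.of_dist_le_mul fun u v => ?_⟩
  have hg_int (a b : ℝ) : IntervalIntegrable g volume a b :=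
    ((hg.locallyIntegrable le_top).integrableOn_isCompact isCompact_uIcc).intervalIntegrable
  rw [dist_eq_norm, Real.dist_eq, integral_interval_sub_left (hg_int c u) (hg_int c v)]
  exact norm_integral_le_of_norm_le_const_ae (hC.mono fun _ hx _ => hx)

theorem intervalIntegrable_deriv_smul_comp_of_memLp_top {f : ℝ → ℝ} {a b : ℝ}
    (hf : AbsolutelyContinuousOnInterval f a b) {g : ℝ → E} (hg : MemLp g ∞ volume) :
    IntervalIntegrable (fun t => deriv f t • g (f t)) volume a b := by
  obtain ⟨C, hC⟩ := exists_ae_norm_le_of_memLp_top hg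
  obtain ⟨g₀, hg₀, hgg₀⟩ := hg.aestronglyMeasurable
  have hf_meas : AEMeasurable f (volume.restrict (uIoc a b)) :=
    (hf.continuousOn.mono uIoc_subset_uIcc).aemeasurable measurableSet_uIoc
  have hf' : IntegrableOn (deriv f) (uIoc a b) := hf.intervalIntegrable_deriv.def'
  have hae : ∀ᵐ t, deriv f t ≠ 0 → ‖g (f t)‖ ≤ C ∧ g (f t) = g₀ (f t) :=
    ae_comp_of_deriv_ne_zero (hC.and hgg₀) f
  rw [intervalIntegrable_iff]
  refine (hf'.norm.mul_const (C : ℝ)).mono' ?_ (ae_restrict_of_ae ?_)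
  · refine (hf'.aestronglyMeasurable.smul
      (hg₀.aestronglyMeasurable.comp_aemeasurable hf_meas)).congr (ae_restrict_of_ae ?_)
    filter_upwards [hae] with t ht
    by_cases h : deriv f t = 0
    · simp [h]
    · simp [(ht h).2]
  · filter_upwards [hae] with t ht
    by_cases h : deriv f t = 0
    · simp [h]
    · rw [norm_smul]
      gcongr
      exact (ht h).1

theorem integral_deriv_smul_comp_of_memLp_top [CompleteSpace E] {f : ℝ → ℝ} {a b : ℝ}
    (hf : AbsolutelyContinuousOnInterval f a b) {g : ℝ → E} (hg : MemLp g ∞ volume) :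
    ∫ t in a..b, deriv f t • g (f t) = ∫ u in f a..f b, g u := by
  obtain ⟨K, hF⟩ := exists_lipschitzWith_integral_of_memLp_top hg (f a)
  set F : ℝ → E := fun u => ∫ x in f a..u, g x with hF_def
  have hFg : ∀ᵐ u, HasDerivAt F (g u) u :=
    (LocallyIntegrable.ae_hasDerivAt_integral (hg.locallyIntegrable le_top)).mono
      fun _ hu => hu (f a)
  have hderiv : ∀ᵐ t, t ∈ uIcc a b → HasDerivAt (F ∘ f) (deriv f t • g (f t)) t := by
    filter_upwards [hf.ae_differentiableAt, ae_hasDerivAt_comp_of_lipschitzWith hF hFg f]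
      with t hft hFft hmem
    exact hFft (hft hmem)
  calc ∫ t in a..b, deriv f t • g (f t) = F (f b) - F (f a) :=
      integral_eq_sub_of_absolutelyContinuousOnInterval
        (absolutelyContinuousOnInterval_comp_of_lipschitzWith hF hf) hderiv
        (intervalIntegrable_deriv_smul_comp_of_memLp_top hf hg)
    _ = ∫ u in f a..f b, g u := by simp only [hF_def, integral_same, sub_zero]

theorem intervalIntegrable_deriv_smul_comp {f : ℝ → ℝ} {a b : ℝ}
    (hf : AbsolutelyContinuousOnInterval f a b) {y : ℝ → E}
    (hy : MemLp y ∞ (volume.restrict (f '' uIcc a b))) :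
    IntervalIntegrable (fun t => deriv f t • y (f t)) volume a b := by
  refine (intervalIntegrable_deriv_smul_comp_of_memLp_top hf
    (memLp_indicator_image_uIcc hf.continuousOn hy)).congr fun t ht => ?_
  simp only [indicator_of_mem (mem_image_of_mem f (uIoc_subset_uIcc ht))]

theorem integral_deriv_smul_comp [CompleteSpace E] {f : ℝ → ℝ} {a b : ℝ}
    (hf : AbsolutelyContinuousOnInterval f a b) {y : ℝ → E}
    (hy : MemLp y ∞ (volume.restrict (f '' uIcc a b))) :
    ∫ t in a..b, deriv f t • y (f t) = ∫ u in f a..f b, y u := by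
  calc ∫ t in a..b, deriv f t • y (f t)
      = ∫ t in a..b, deriv f t • (f '' uIcc a b).indicator y (f t) :=
      integral_congr fun t ht => by simp only [indicator_of_mem (mem_image_of_mem f ht)]
    _ = ∫ u in f a..f b, (f '' uIcc a b).indicator y u :=
      integral_deriv_smul_comp_of_memLp_top hf (memLp_indicator_image_uIcc hf.continuousOn hy)
    _ = ∫ u in f a..f b, y u :=
      integral_congr fun _ hu => indicator_of_mem (intermediate_value_uIcc hf.continuousOn hu) y

end ChangeOfVariables

theorem AbsolutelyContinuousOn.absolutelyContinuousOnInterval {f : ℝ → ℝ} {a b : ℝ} (hab : a ≤ b)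
    (hf : AbsolutelyContinuousOn f (Icc a b)) : AbsolutelyContinuousOnInterval f a b := by
  refine (absolutelyContinuousOnInterval_iff f a b).2 fun ε hε => ?_
  obtain ⟨δ, hδ, hsum⟩ := hf ε hε
  refine ⟨δ, hδ, ?_⟩
  rintro ⟨n, P⟩ ⟨hmem, hdisj⟩ hlength
  simp only [uIcc_of_le hab, Finset.mem_range] at hmem
  have hdist (x y : ℝ) : |f (max x y) - f (min x y)| = dist (f x) (f y) := by
    rcases le_total x y with h | h
    · rw [max_eq_right h, min_eq_left h, dist_comm, Real.dist_eq]
    · rw [max_eq_left h, min_eq_right h, Real.dist_eq]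
  simp only [← hdist]
  refine hsum n (fun i => min (P i).1 (P i).2) (fun i => max (P i).1 (P i).2) ?_ ?_ ?_
  · intro i hi
    obtain ⟨h₁, h₂⟩ := hmem i hi
    exact ⟨⟨le_min h₁.1 h₂.1, min_le_of_left_le h₁.2⟩, ⟨le_max_of_le_left h₁.1, max_le h₁.2 h₂.2⟩,
      min_le_max⟩
  · intro i hi j hj hij
    exact ((hdisj (Finset.mem_coe.2 (Finset.mem_range.2 hi))
      (Finset.mem_coe.2 (Finset.mem_range.2 hj)) hij).mono
        Ioo_subset_Ioc_self Ioo_subset_Ioc_self).inter_eq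
  · simpa only [max_sub_min_eq_abs', ← Real.dist_eq] using hlength

theorem LocallyAbsolutelyContinuousOn.absolutelyContinuousOnInterval {f : ℝ → ℝ} {I : Set ℝ}
    (hf : LocallyAbsolutelyContinuousOn f I) {a b : ℝ} (ha : a ∈ I) (hb : b ∈ I) :
    AbsolutelyContinuousOnInterval f a b := by
  rcases le_total a b with hab | hba
  · exact (hf a ha b hb).absolutelyContinuousOnInterval hab
  · exact ((hf b hb a ha).absolutelyContinuousOnInterval hba).symm

theorem LocEssBdd.memLp_top_of_isCompact {E : Type*} [NormedAddCommGroup E] {y : ℝ → E}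
    {J K : Set ℝ} (hy : LocEssBdd y J) (hK : IsCompact K) (hKJ : K ⊆ J) :
    MemLp y ∞ (volume.restrict K) := by
  rcases K.eq_empty_or_nonempty with rfl | hne
  · simp
  obtain ⟨M, hM⟩ := hy.2 _ (hKJ (hK.sInf_mem hne)) _ (hKJ (hK.sSup_mem hne))
  have hK_subset : K ⊆ uIcc (sInf K) (sSup K) := fun _ hx =>
    Icc_subset_uIcc ⟨csInf_le hK.bddBelow hx, le_csSup hK.bddAbove hx⟩
  exact memLp_top_of_bound (hy.1.mono_set hKJ) M (ae_restrict_of_ae_restrict_of_subset hK_subset hM)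

theorem IsDerivWithinOf.eq_deriv_of_mem_interior {f' f : ℝ → ℝ} {I : Set ℝ}
    (hf' : IsDerivWithinOf f' f I) {t : ℝ} (ht : t ∈ interior I) : f' t = deriv f t := by
  have hI : I ∈ 𝓝 t := mem_interior_iff_mem_nhds.1 ht
  obtain ⟨hdiff, hnot_diff⟩ := hf' t (interior_subset ht)
  by_cases h : DifferentiableAt ℝ f t
  · exact ((hdiff h.differentiableWithinAt).hasDerivAt hI).deriv.symm
  · rw [hnot_diff fun hwithin => h (hwithin.differentiableAt hI),
      deriv_zero_of_not_differentiableAt h]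

theorem IsDerivWithinOf.ae_eq_deriv {f' f : ℝ → ℝ} {I : Set ℝ} (hI : I.OrdConnected)
    (hf' : IsDerivWithinOf f' f I) : ∀ᵐ t, t ∈ I → f' t = deriv f t := by
  have hfrontier : ∀ᵐ t, t ∉ frontier I :=
    measure_eq_zero_iff_ae_notMem.1 (hI.convex.addHaar_frontier volume)
  filter_upwards [hfrontier] with t ht htI
  exact hf'.eq_deriv_of_mem_interior (by_contra fun h => ht ⟨subset_closure htI, h⟩)

/-- change of variables for the Bochner integral. If
`y ∈ L^∞_loc(J; E)` and `f ∈ AC_loc(I)` with `f(I) ⊆ J`, then `f'·(y ∘ f)` is locally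
Bochner integrable on `I` and `∫_s^t f'·(y ∘ f) dλ = ∫_{f(s)}^{f(t)} y dλ`. -/
theorem stmt2 {E : Type*} [NormedAddCommGroup E] [NormedSpace ℝ E] [CompleteSpace E]
    (I J : Set ℝ) (hI : I.OrdConnected) (hJ : J.OrdConnected)
    (y : ℝ → E) (hy : LocEssBdd y J)
    (f f' : ℝ → ℝ) (hf : LocallyAbsolutelyContinuousOn f I)
    (hf' : IsDerivWithinOf f' f I) (hfIJ : f '' I ⊆ J) :
    (∀ a ∈ I, ∀ b ∈ I, IntervalIntegrable (fun τ => f' τ • y (f τ)) volume a b) ∧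
    ∀ s ∈ I, ∀ t ∈ I, (∫ τ in s..t, f' τ • y (f τ)) = ∫ u in f s..f t, y u := by
  have key (a : ℝ) (ha : a ∈ I) (b : ℝ) (hb : b ∈ I) :
      IntervalIntegrable (fun τ => f' τ • y (f τ)) volume a b ∧
        (∫ τ in a..b, f' τ • y (f τ)) = ∫ u in f a..f b, y u := by
    have hsub : uIcc a b ⊆ I := hI.uIcc_subset ha hb
    have hac : AbsolutelyContinuousOnInterval f a b := hf.absolutelyContinuousOnInterval ha hb
    have hy_image : MemLp y ∞ (volume.restrict (f '' uIcc a b)) :=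
      hy.memLp_top_of_isCompact (isCompact_uIcc.image_of_continuousOn hac.continuousOn)
        ((image_mono hsub).trans hfIJ)
    have hae : ∀ᵐ τ, τ ∈ uIoc a b → deriv f τ • y (f τ) = f' τ • y (f τ) := by
      filter_upwards [hf'.ae_eq_deriv hI] with τ hτ hmem
      rw [hτ (hsub (uIoc_subset_uIcc hmem))]
    exact ⟨(intervalIntegrable_deriv_smul_comp hac hy_image).congr_ae
        ((ae_restrict_iff' measurableSet_uIoc).2 hae),
      (intervalIntegral.integral_congr_ae hae).symm.trans (integral_deriv_smul_comp hac hy_image)⟩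
  exact ⟨fun a ha b hb => (key a ha b hb).1, fun s hs t ht => (key s hs t ht).2⟩
end

section
/- Let I ⊆ ℝ be an interval, E a Banach space, A₁, A₂ : I → End(E) locally Bochner integrable, and X₁, X₂ evolution operators for A₁, A₂ in E. Suppose N > 0, ν₁ ∈ ℝ, ε ∈ {+1, −1}, and ‖X₁(t, s)^ε‖ ≤ N e^{−ν₁(t−s)} for all s ≤ t in I. Then for all s ≤ t in I: ‖X₂(t, s)^ε‖ ≤ N e^{−ν₁(t−s)} e^{N ∫_s^t ‖A₂ − A₁‖ dλ} and ‖X₂(t, s)^ε − X₁(t, s)^ε‖ ≤ N e^{−ν₁(t−s)} (e^{N ∫_s^t ‖A₂ − A₁‖ dλ} − 1). -/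
open MeasureTheory Set intervalIntegral

/-- An evolution operator for `A` in `E` on the interval `I`: for each `s ∈ I`,
`X(·, s)` is a continuous operator solution of `X' = A ∘ X` with `X(s,s) = id`. -/
def IsEvolutionOperator {E : Type*} [NormedAddCommGroup E] [NormedSpace ℝ E]
    (I : Set ℝ) (A : ℝ → E →L[ℝ] E) (X : ℝ → ℝ → E →L[ℝ] E) : Prop :=
  ∀ s ∈ I, ContinuousOn (fun t => X t s) I ∧ X s s = ContinuousLinearMap.id ℝ E ∧
    ∀ u ∈ I, ∀ t ∈ I, X t s - X u s = ∫ τ in u..t, (A τ).comp (X τ s)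

/-- `evPow X ε t s` is `X(t,s)^ε`: `X(t,s)` when `ε = +1` (`true`) and its inverse
`X(t,s)⁻¹ = X(s,t)` when `ε = −1` (`false`). -/
def evPow {E : Type*} [NormedAddCommGroup E] [NormedSpace ℝ E]
    (X : ℝ → ℝ → E →L[ℝ] E) (ε : Bool) (t s : ℝ) : E →L[ℝ] E :=
  if ε then X t s else X s t

/-!
The map `τ ↦ X₁(t,τ) X₂(τ,s)` is absolutely continuous, and integrating its derivative over `[s,t]`
gives the variation of constants formula
`X₂(t,s) - X₁(t,s) = ∫_s^t X₁(t,τ) (A₂ - A₁)(τ) X₂(τ,s) dτ`. With the bound on `X₁`, Gronwall's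
inequality for `τ ↦ e^{ν(τ-s)} ‖X₂(τ,s)‖` yields the estimate for `ε = +1`. Since `X(t,s)⁻¹` is
`X(s,t)`, the case `ε = -1` is the same estimate for the time-reversed families `X(-t,-s)`, whose
coefficients are `-A(-t)`.
-/

section AbsoluteContinuity

variable {a b : ℝ}

theorem absolutelyContinuousOnInterval_of_dist_le {X Y : Type*} [PseudoMetricSpace X]
    [PseudoMetricSpace Y] {f : ℝ → X} {g : ℝ → Y} (K : ℝ)
    (hg : AbsolutelyContinuousOnInterval g a b)
    (hfg : ∀ x ∈ uIcc a b, ∀ y ∈ uIcc a b, dist (f x) (f y) ≤ K * dist (g x) (g y)) :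
    AbsolutelyContinuousOnInterval f a b := by
  unfold AbsolutelyContinuousOnInterval at hg ⊢
  refine squeeze_zero' (.of_forall fun _ => Finset.sum_nonneg fun _ _ => dist_nonneg) ?_
    (by simpa only [mul_zero] using hg.const_mul K)
  rw [Filter.eventually_inf_principal]
  filter_upwards with E hE
  rw [Finset.mul_sum]
  exact Finset.sum_le_sum fun i hi => hfg _ (hE.1 i hi).1 _ (hE.1 i hi).2

theorem absolutelyContinuousOnInterval_prodMk {X Y : Type*} [PseudoMetricSpace X]
    [PseudoMetricSpace Y] {f : ℝ → X} {g : ℝ → Y}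
    (hf : AbsolutelyContinuousOnInterval f a b) (hg : AbsolutelyContinuousOnInterval g a b) :
    AbsolutelyContinuousOnInterval (fun x => (f x, g x)) a b := by
  refine squeeze_zero (fun _ => Finset.sum_nonneg fun _ _ => dist_nonneg) (fun E => ?_)
    (by simpa only [add_zero] using Filter.Tendsto.add hf hg)
  rw [← Finset.sum_add_distrib]
  exact Finset.sum_le_sum fun _ _ => max_le_add_of_nonneg dist_nonneg dist_nonneg

theorem absolutelyContinuousOnInterval_comp_of_contDiffAt {E F : Type*}
    [NormedAddCommGroup E] [NormedSpace ℝ E] [NormedAddCommGroup F] [NormedSpace ℝ F]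
    {φ : E → F} {f : ℝ → E} (hf : AbsolutelyContinuousOnInterval f a b)
    (hφ : ∀ x ∈ uIcc a b, ContDiffAt ℝ 1 φ (f x)) :
    AbsolutelyContinuousOnInterval (fun x => φ (f x)) a b := by
  have hlip : LocallyLipschitzOn (f '' uIcc a b) φ := by
    rintro _ ⟨x, hx, rfl⟩
    obtain ⟨K, t, ht, hK⟩ := (hφ x hx).exists_lipschitzOnWith
    exact ⟨K, t, mem_nhdsWithin_of_mem_nhds ht, hK⟩
  obtain ⟨K, hK⟩ :=
    hlip.exists_lipschitzOnWith_of_compact (isCompact_uIcc.image_of_continuousOn hf.continuousOn)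
  exact absolutelyContinuousOnInterval_of_dist_le K hf fun x hx y hy =>
    hK.dist_le_mul _ (mem_image_of_mem f hx) _ (mem_image_of_mem f hy)

theorem absolutelyContinuousOnInterval_mul {R : Type*} [NormedRing R] [NormedAlgebra ℝ R]
    {f g : ℝ → R} (hf : AbsolutelyContinuousOnInterval f a b)
    (hg : AbsolutelyContinuousOnInterval g a b) :
    AbsolutelyContinuousOnInterval (fun x => f x * g x) a b := by
  have hmul : ContDiff ℝ 1 fun p : R × R => p.1 * p.2 := contDiff_mul
  have hpair := absolutelyContinuousOnInterval_prodMk hf hg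
  have hcomp := absolutelyContinuousOnInterval_comp_of_contDiffAt hpair fun _ _ => hmul.contDiffAt
  exact hcomp

section Primitive

variable {F : Type*} [NormedAddCommGroup F] [NormedSpace ℝ F] {f f' : ℝ → F}

theorem absolutelyContinuousOnInterval_of_sub_eq_integral
    (hf' : IntervalIntegrable f' volume a b)
    (hf : ∀ t ∈ uIcc a b, f t - f a = ∫ τ in a..t, f' τ) :
    AbsolutelyContinuousOnInterval f a b := by
  have hac := hf'.norm.absolutelyContinuousOnInterval_intervalIntegral (c := a) left_mem_uIcc
  refine absolutelyContinuousOnInterval_of_dist_le 1 hac fun x hx y hy => ?_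
  have hint : ∀ {z}, z ∈ uIcc a b → IntervalIntegrable f' volume a z := fun hz =>
    hf'.mono_set (uIcc_subset_uIcc left_mem_uIcc hz)
  have hsub : f x - f y = ∫ τ in y..x, f' τ := by
    rw [← sub_sub_sub_cancel_right _ _ (f a), hf x hx, hf y hy,
      integral_interval_sub_left (hint hx) (hint hy)]
  rw [one_mul, dist_eq_norm, Real.dist_eq, hsub,
    integral_interval_sub_left (hint hx).norm (hint hy).norm]
  exact norm_integral_le_abs_integral_norm

variable [CompleteSpace F]

theorem ae_hasDerivAt_of_sub_eq_integral
    (hf' : IntervalIntegrable f' volume a b)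
    (hf : ∀ t ∈ uIcc a b, f t - f a = ∫ τ in a..t, f' τ) :
    ∀ᵐ x, x ∈ uIcc a b → HasDerivAt f (f' x) x := by
  have hne : ∀ c : ℝ, ∀ᵐ x, x ≠ c := fun c => Measure.ae_ne volume c
  filter_upwards [hf'.ae_hasDerivAt_integral, hne (min a b), hne (max a b)] with x hx hmin hmax hxab
  have hnhds : uIcc a b ∈ nhds x :=
    Icc_mem_nhds (lt_of_le_of_ne hxab.1 hmin.symm) (lt_of_le_of_ne hxab.2 hmax)
  refine ((hx hxab a left_mem_uIcc).const_add (f a)).congr_of_eventuallyEq ?_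
  filter_upwards [hnhds] with t ht
  rw [← hf t ht, add_sub_cancel]

theorem integral_eq_sub_of_ae_hasDerivAt
    (hf : AbsolutelyContinuousOnInterval f a b) (hf' : IntervalIntegrable f' volume a b)
    (hderiv : ∀ᵐ x, x ∈ uIcc a b → HasDerivAt f (f' x) x) :
    ∫ x in a..b, f' x = f b - f a := by
  have hprim : AbsolutelyContinuousOnInterval (fun x => ∫ τ in a..x, f' τ) a b :=
    absolutelyContinuousOnInterval_of_sub_eq_integral hf' fun t _ => by
      rw [integral_same, sub_zero]
  obtain ⟨C, hC⟩ := (hf.fun_sub hprim).const_of_ae_hasDerivAt_zero <| by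
    filter_upwards [hderiv, hf'.ae_hasDerivAt_integral] with x hfx hprimx hx
    simpa only [sub_self] using (hfx hx).fun_sub (hprimx hx a left_mem_uIcc)
  have hconst := (hC a left_mem_uIcc).trans (hC b right_mem_uIcc).symm
  rw [integral_same, sub_zero] at hconst
  rw [hconst, sub_sub_cancel]

end Primitive

theorem le_of_ae_hasDerivAt_nonpos {f f' : ℝ → ℝ} (hab : a ≤ b)
    (hf : AbsolutelyContinuousOnInterval f a b)
    (hderiv : ∀ᵐ x, x ∈ uIcc a b → HasDerivAt f (f' x) x)
    (hf' : ∀ x ∈ uIcc a b, f' x ≤ 0) : f b ≤ f a := by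
  have hint : 0 ≤ ∫ x in a..b, -deriv f x := by
    refine integral_nonneg_of_ae_restrict hab ((ae_restrict_iff' measurableSet_Icc).2 ?_)
    filter_upwards [hderiv] with x hx hxab
    rw [← uIcc_of_le hab] at hxab
    simpa only [(hx hxab).deriv, Pi.zero_apply, neg_nonneg] using hf' x hxab
  rwa [intervalIntegral.integral_neg, hf.integral_deriv_eq_sub, neg_sub, sub_nonneg] at hint

end AbsoluteContinuity

section Gronwall

variable {a b : ℝ}

-- The hypothesis `u ≤ v := c + ∫ g u` says that `v * exp (-∫ g)` has nonpositive derivative.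
theorem integral_mul_le_of_le_add_integral_mul {u g : ℝ → ℝ} {c : ℝ} (hab : a ≤ b)
    (hg : IntervalIntegrable g volume a b)
    (hgu : IntervalIntegrable (fun x => g x * u x) volume a b)
    (hg_nonneg : ∀ x ∈ Icc a b, 0 ≤ g x)
    (hu : ∀ t ∈ Icc a b, u t ≤ c + ∫ τ in a..t, g τ * u τ) :
    ∫ τ in a..b, g τ * u τ ≤ c * (Real.exp (∫ τ in a..b, g τ) - 1) := by
  let v : ℝ → ℝ := fun t => c + ∫ τ in a..t, g τ * u τ
  let m : ℝ → ℝ := fun t => -∫ τ in a..t, g τ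
  have hv : ∀ t ∈ uIcc a b, v t - v a = ∫ τ in a..t, g τ * u τ := fun t _ => by
    simp only [v, integral_same, add_zero, add_sub_cancel_left]
  have hm : ∀ t ∈ uIcc a b, m t - m a = ∫ τ in a..t, -g τ := fun t _ => by
    simp only [m, integral_same, neg_zero, sub_zero, intervalIntegral.integral_neg]
  have hac : AbsolutelyContinuousOnInterval (fun t => v t * Real.exp (m t)) a b :=
    (absolutelyContinuousOnInterval_of_sub_eq_integral hgu hv).fun_mul
      (absolutelyContinuousOnInterval_comp_of_contDiffAt
        (absolutelyContinuousOnInterval_of_sub_eq_integral hg.neg hm)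
        fun _ _ => Real.contDiff_exp.contDiffAt)
  have hdecay : v b * Real.exp (m b) ≤ v a * Real.exp (m a) := by
    refine le_of_ae_hasDerivAt_nonpos hab hac
      (f' := fun t => g t * u t * Real.exp (m t) + v t * (Real.exp (m t) * -g t)) ?_ ?_
    · filter_upwards [ae_hasDerivAt_of_sub_eq_integral hgu hv,
        ae_hasDerivAt_of_sub_eq_integral hg.neg hm] with t hvt hmt ht
      exact (hvt ht).fun_mul (hmt ht).exp
    · intro t ht
      rw [uIcc_of_le hab] at ht
      have := mul_nonneg (mul_nonneg (hg_nonneg t ht) (Real.exp_pos (m t)).le)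
        (sub_nonneg.2 (hu t ht))
      linarith
  have hvb : v b ≤ c * Real.exp (∫ τ in a..b, g τ) := by
    simpa only [m, v, integral_same, add_zero, neg_zero, Real.exp_zero, mul_one, Real.exp_neg,
      ← div_eq_mul_inv, div_le_iff₀ (Real.exp_pos _)] using hdecay
  linarith

theorem eq_zero_of_eq_integral_mul {R : Type*} [NormedRing R] [NormedAlgebra ℝ R]
    {A D : ℝ → R} (hab : a ≤ b) (hA : IntervalIntegrable A volume a b)
    (hD : ContinuousOn D (Icc a b)) (hDA : ∀ t ∈ Icc a b, D t = ∫ τ in a..t, A τ * D τ) :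
    D b = 0 := by
  have hAD : IntervalIntegrable (fun τ => ‖A τ‖ * ‖D τ‖) volume a b :=
    hA.norm.mul_continuousOn (by simpa only [uIcc_of_le hab] using hD.norm)
  have hle : ∀ t ∈ Icc a b, ‖D t‖ ≤ ∫ τ in a..t, ‖A τ‖ * ‖D τ‖ := fun t ht => by
    rw [hDA t ht]
    exact norm_integral_le_of_norm_le ht.1 (.of_forall fun τ _ => norm_mul_le _ _)
      (hAD.mono_set (uIcc_subset_uIcc left_mem_uIcc (Icc_subset_uIcc ht)))
  have hgronwall := integral_mul_le_of_le_add_integral_mul (c := 0) hab hA.norm hAD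
    (fun _ _ => norm_nonneg _) (by simpa only [zero_add] using hle)
  rw [zero_mul] at hgronwall
  exact norm_le_zero_iff.1 ((hle b (right_mem_Icc.2 hab)).trans hgronwall)

end Gronwall

section EvolutionFamily

/-- `X` is the evolution operator on `I` of the equation `X' = A * X` in a Banach algebra, for a
locally integrable coefficient `A`. For the algebra of bounded operators on a Banach space this is
`IsEvolutionOperator` together with the local integrability of `A`. -/
structure IsEvolutionFamily {R : Type*} [NormedRing R] [NormedAlgebra ℝ R] (I : Set ℝ)
    (A : ℝ → R) (X : ℝ → ℝ → R) : Prop where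
  intervalIntegrable : ∀ a ∈ I, ∀ b ∈ I, IntervalIntegrable A volume a b
  continuousOn : ∀ s ∈ I, ContinuousOn (fun t => X t s) I
  apply_self : ∀ s ∈ I, X s s = 1
  sub_eq_integral : ∀ s ∈ I, ∀ u ∈ I, ∀ t ∈ I, X t s - X u s = ∫ τ in u..t, A τ * X τ s

/-- The power `X(t,s)^ε` in a Banach algebra, with the encoding of `evPow`: `X(t,s)` for
`ε = true` and its inverse, written as `X(s,t)`, for `ε = false`. -/
def evolutionPow {R : Type*} (X : ℝ → ℝ → R) (ε : Bool) (t s : ℝ) : R :=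
  if ε then X t s else X s t

theorem IsEvolutionOperator.isEvolutionFamily {E : Type*} [NormedAddCommGroup E]
    [NormedSpace ℝ E] {I : Set ℝ} {A : ℝ → E →L[ℝ] E} {X : ℝ → ℝ → E →L[ℝ] E}
    (hX : IsEvolutionOperator I A X)
    (hA : ∀ a ∈ I, ∀ b ∈ I, IntervalIntegrable A volume a b) : IsEvolutionFamily I A X where
  intervalIntegrable := hA
  continuousOn s hs := (hX s hs).1
  apply_self s hs := (hX s hs).2.1
  sub_eq_integral s hs := (hX s hs).2.2

namespace IsEvolutionFamily

variable {R : Type*} [NormedRing R] [NormedAlgebra ℝ R] {I : Set ℝ} {A A₁ A₂ : ℝ → R}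
  {X X₁ X₂ : ℝ → ℝ → R} {a b r s t N ν : ℝ}

theorem comp_neg (hX : IsEvolutionFamily I A X) :
    IsEvolutionFamily (Neg.neg ⁻¹' I) (fun τ => -A (-τ)) (fun t s => X (-t) (-s)) where
  intervalIntegrable a ha b hb := by
    have hA := (IntervalIntegrable.iff_comp_neg).1 (hX.intervalIntegrable _ ha _ hb)
    simp only [neg_neg] at hA
    exact hA.neg
  continuousOn s hs := (hX.continuousOn _ hs).comp continuousOn_neg (mapsTo_preimage _ _)
  apply_self s hs := hX.apply_self _ hs
  sub_eq_integral s hs u hu t ht := by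
    simp only [neg_mul, intervalIntegral.integral_neg]
    rw [integral_comp_neg (fun τ => A τ * X τ (-s)), ← integral_symm,
      hX.sub_eq_integral _ hs _ hu _ ht]

theorem intervalIntegrable_mul (hX : IsEvolutionFamily I A X) (hI : I.OrdConnected)
    (ha : a ∈ I) (hb : b ∈ I) (hs : s ∈ I) :
    IntervalIntegrable (fun τ => A τ * X τ s) volume a b :=
  (hX.intervalIntegrable a ha b hb).mul_continuousOn
    ((hX.continuousOn s hs).mono (hI.uIcc_subset ha hb))

theorem absolutelyContinuousOnInterval (hX : IsEvolutionFamily I A X) (hI : I.OrdConnected)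
    (ha : a ∈ I) (hb : b ∈ I) (hs : s ∈ I) :
    AbsolutelyContinuousOnInterval (fun τ => X τ s) a b :=
  absolutelyContinuousOnInterval_of_sub_eq_integral (hX.intervalIntegrable_mul hI ha hb hs)
    fun t ht => hX.sub_eq_integral s hs a ha t (hI.uIcc_subset ha hb ht)

theorem intervalIntegrable_norm_sub_mul (hX₁ : IsEvolutionFamily I A₁ X₁)
    (hX₂ : IsEvolutionFamily I A₂ X₂) (hI : I.OrdConnected) (hs : s ∈ I) (ht : t ∈ I) :
    IntervalIntegrable (fun τ => N * ‖A₂ τ - A₁ τ‖ * (Real.exp (ν * (τ - s)) * ‖X₂ τ s‖))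
      volume s t := by
  have hexp : Continuous fun τ => Real.exp (ν * (τ - s)) := by fun_prop
  have hA := (hX₂.intervalIntegrable s hs t ht).sub (hX₁.intervalIntegrable s hs t ht)
  exact (hA.norm.const_mul N).mul_continuousOn
    (hexp.continuousOn.mul ((hX₂.continuousOn s hs).mono (hI.uIcc_subset hs ht)).norm)

variable [CompleteSpace R]

theorem ae_hasDerivAt (hX : IsEvolutionFamily I A X) (hI : I.OrdConnected)
    (ha : a ∈ I) (hb : b ∈ I) (hs : s ∈ I) :
    ∀ᵐ τ, τ ∈ uIcc a b → HasDerivAt (fun τ => X τ s) (A τ * X τ s) τ :=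
  ae_hasDerivAt_of_sub_eq_integral (hX.intervalIntegrable_mul hI ha hb hs)
    fun t ht => hX.sub_eq_integral s hs a ha t (hI.uIcc_subset ha hb ht)

-- As functions of `r`, both sides solve the same linear equation with the same value at `r = s`.
theorem mul_apply_of_le (hX : IsEvolutionFamily I A X) (hI : I.OrdConnected)
    (hr : r ∈ I) (hs : s ∈ I) (ht : t ∈ I) (hsr : s ≤ r) : X r s * X s t = X r t := by
  have hsub : Icc s r ⊆ I := hI.out hs hr
  have hcont : ContinuousOn (fun τ => X τ s * X s t - X τ t) (Icc s r) :=
    (((hX.continuousOn s hs).mul continuousOn_const).sub (hX.continuousOn t ht)).mono hsub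
  refine sub_eq_zero.1 (eq_zero_of_eq_integral_mul hsr (hX.intervalIntegrable s hs r hr) hcont ?_)
  intro τ hτ
  have hint : ∀ {σ}, σ ∈ I → IntervalIntegrable (fun ρ => A ρ * X ρ σ) volume s τ :=
    hX.intervalIntegrable_mul hI hs (hsub hτ)
  have hconst : ∫ ρ in s..τ, A ρ * X ρ s * X s t = (∫ ρ in s..τ, A ρ * X ρ s) * X s t :=
    ((ContinuousLinearMap.mul ℝ R).flip (X s t)).intervalIntegral_comp_comm (hint hs)
  simp only [mul_sub, ← mul_assoc]
  rw [integral_sub ((hint hs).mul_const _) (hint ht), hconst,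
    ← hX.sub_eq_integral s hs s hs τ (hsub hτ), ← hX.sub_eq_integral t ht s hs τ (hsub hτ),
    hX.apply_self s hs, sub_mul, one_mul, sub_sub_sub_cancel_right]

theorem mul_apply (hX : IsEvolutionFamily I A X) (hI : I.OrdConnected)
    (hr : r ∈ I) (hs : s ∈ I) (ht : t ∈ I) : X r s * X s t = X r t := by
  rcases le_total s r with hsr | hrs
  · exact hX.mul_apply_of_le hI hr hs ht hsr
  · have hmem : ∀ {x}, x ∈ I → -x ∈ Neg.neg ⁻¹' I := fun hx => by
      rwa [mem_preimage, neg_neg]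
    simpa only [neg_neg] using hX.comp_neg.mul_apply_of_le (hI.preimage_anti fun _ _ => neg_le_neg)
      (hmem hr) (hmem hs) (hmem ht) (neg_le_neg hrs)

theorem exists_unit (hX : IsEvolutionFamily I A X) (hI : I.OrdConnected)
    (ht : t ∈ I) (hs : s ∈ I) : ∃ x : Rˣ, (x : R) = X t s ∧ ((x⁻¹ : Rˣ) : R) = X s t :=
  ⟨⟨X t s, X s t, by rw [hX.mul_apply hI ht hs ht, hX.apply_self t ht],
    by rw [hX.mul_apply hI hs ht hs, hX.apply_self s hs]⟩, rfl, rfl⟩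

theorem ringInverse_apply (hX : IsEvolutionFamily I A X) (hI : I.OrdConnected)
    (ht : t ∈ I) (hs : s ∈ I) : Ring.inverse (X t s) = X s t := by
  obtain ⟨x, hx, hx_inv⟩ := hX.exists_unit hI ht hs
  rw [← hx, Ring.inverse_unit, hx_inv]

theorem absolutelyContinuousOnInterval_ringInverse (hX : IsEvolutionFamily I A X)
    (hI : I.OrdConnected) (ha : a ∈ I) (hb : b ∈ I) (hs : s ∈ I) :
    AbsolutelyContinuousOnInterval (fun τ => Ring.inverse (X τ s)) a b := by
  refine absolutelyContinuousOnInterval_comp_of_contDiffAt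
    (hX.absolutelyContinuousOnInterval hI ha hb hs) fun τ hτ => ?_
  obtain ⟨x, hx, -⟩ := hX.exists_unit hI (hI.uIcc_subset ha hb hτ) hs
  exact hx ▸ contDiffAt_ringInverse ℝ x

theorem ae_hasDerivAt_ringInverse (hX : IsEvolutionFamily I A X) (hI : I.OrdConnected)
    (ha : a ∈ I) (hb : b ∈ I) (hs : s ∈ I) :
    ∀ᵐ τ, τ ∈ uIcc a b →
      HasDerivAt (fun τ => Ring.inverse (X τ s)) (-(X s τ * A τ)) τ := by
  filter_upwards [hX.ae_hasDerivAt hI ha hb hs] with τ hderiv hτ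
  have hτI : τ ∈ I := hI.uIcc_subset ha hb hτ
  obtain ⟨x, hx, hx_inv⟩ := hX.exists_unit hI hτI hs
  have hinv : HasFDerivAt Ring.inverse
      (-ContinuousLinearMap.mulLeftRight ℝ R (X s τ) (X s τ)) (X τ s) := by
    simpa only [hx, hx_inv] using hasFDerivAt_ringInverse (𝕜 := ℝ) x
  have hcancel : X s τ * (A τ * X τ s) * X s τ = X s τ * A τ := by
    rw [mul_assoc, mul_assoc, hX.mul_apply hI hτI hs hτI, hX.apply_self τ hτI, mul_one]
  refine (hinv.comp_hasDerivAt τ (hderiv hτ)).congr_deriv ?_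
  simp only [neg_apply, ContinuousLinearMap.mulLeftRight_apply, hcancel]

theorem sub_eq_integral_mul (hX₁ : IsEvolutionFamily I A₁ X₁) (hX₂ : IsEvolutionFamily I A₂ X₂)
    (hI : I.OrdConnected) (hs : s ∈ I) (ht : t ∈ I) :
    X₂ t s - X₁ t s = ∫ τ in s..t, X₁ t τ * (A₂ τ - A₁ τ) * X₂ τ s := by
  have hinv : ∀ τ ∈ uIcc s t, Ring.inverse (X₁ τ t) = X₁ t τ := fun τ hτ =>
    hX₁.ringInverse_apply hI (hI.uIcc_subset hs ht hτ) ht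
  have hac₁ := hX₁.absolutelyContinuousOnInterval_ringInverse hI hs ht ht
  have hac₂ := hX₂.absolutelyContinuousOnInterval hI hs ht hs
  have hint : IntervalIntegrable (fun τ => X₁ t τ * (A₂ τ - A₁ τ) * X₂ τ s) volume s t :=
    (((hX₂.intervalIntegrable s hs t ht).sub
      (hX₁.intervalIntegrable s hs t ht)).continuousOn_mul
        (hac₁.continuousOn.congr fun τ hτ => (hinv τ hτ).symm)).mul_continuousOn hac₂.continuousOn
  have hac := absolutelyContinuousOnInterval_mul hac₁ hac₂
  have hderiv : ∀ᵐ τ, τ ∈ uIcc s t → HasDerivAt (fun τ => Ring.inverse (X₁ τ t) * X₂ τ s)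
      (X₁ t τ * (A₂ τ - A₁ τ) * X₂ τ s) τ := by
    filter_upwards [hX₁.ae_hasDerivAt_ringInverse hI hs ht ht,
      hX₂.ae_hasDerivAt hI hs ht hs] with τ hderiv₁ hderiv₂ hτ
    refine ((hderiv₁ hτ).fun_mul (hderiv₂ hτ)).congr_deriv ?_
    rw [hinv τ hτ]
    noncomm_ring
  rw [integral_eq_sub_of_ae_hasDerivAt hac hint hderiv, hinv s left_mem_uIcc,
    hinv t right_mem_uIcc, hX₁.apply_self t ht, hX₂.apply_self s hs, one_mul, mul_one]

theorem norm_sub_le_exp_mul_integral (hX₁ : IsEvolutionFamily I A₁ X₁)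
    (hX₂ : IsEvolutionFamily I A₂ X₂) (hI : I.OrdConnected)
    (hbound : ∀ s ∈ I, ∀ t ∈ I, s ≤ t → ‖X₁ t s‖ ≤ N * Real.exp (-ν * (t - s)))
    (hs : s ∈ I) (ht : t ∈ I) (hst : s ≤ t) :
    ‖X₂ t s - X₁ t s‖ ≤ Real.exp (-ν * (t - s)) *
      ∫ τ in s..t, N * ‖A₂ τ - A₁ τ‖ * (Real.exp (ν * (τ - s)) * ‖X₂ τ s‖) := by
  rw [hX₁.sub_eq_integral_mul hX₂ hI hs ht, ← intervalIntegral.integral_const_mul]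
  refine norm_integral_le_of_norm_le hst (.of_forall fun τ hτ => ?_)
    ((hX₁.intervalIntegrable_norm_sub_mul hX₂ hI hs ht).const_mul _)
  have hexp : Real.exp (-ν * (t - τ)) = Real.exp (-ν * (t - s)) * Real.exp (ν * (τ - s)) := by
    rw [← Real.exp_add]
    ring_nf
  calc ‖X₁ t τ * (A₂ τ - A₁ τ) * X₂ τ s‖
      ≤ ‖X₁ t τ‖ * ‖A₂ τ - A₁ τ‖ * ‖X₂ τ s‖ := norm_mul₃_le
    _ ≤ N * Real.exp (-ν * (t - τ)) * ‖A₂ τ - A₁ τ‖ * ‖X₂ τ s‖ := by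
        gcongr
        exact hbound τ (hI.out hs ht (Ioc_subset_Icc_self hτ)) t ht hτ.2
    _ = _ := by
        rw [hexp]
        ring

theorem norm_sub_le (hX₁ : IsEvolutionFamily I A₁ X₁)
    (hX₂ : IsEvolutionFamily I A₂ X₂) (hI : I.OrdConnected)
    (hbound : ∀ s ∈ I, ∀ t ∈ I, s ≤ t → ‖X₁ t s‖ ≤ N * Real.exp (-ν * (t - s)))
    (hs : s ∈ I) (ht : t ∈ I) (hst : s ≤ t) :
    ‖X₂ t s - X₁ t s‖ ≤
      N * Real.exp (-ν * (t - s)) * (Real.exp (N * ∫ τ in s..t, ‖A₂ τ - A₁ τ‖) - 1) := by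
  have hN : 0 ≤ N := by
    simpa only [sub_self, mul_zero, Real.exp_zero, mul_one] using
      (norm_nonneg _).trans (hbound s hs s hs le_rfl)
  let g : ℝ → ℝ := fun τ => N * ‖A₂ τ - A₁ τ‖
  let u : ℝ → ℝ := fun τ => Real.exp (ν * (τ - s)) * ‖X₂ τ s‖
  have hg : IntervalIntegrable g volume s t :=
    ((hX₂.intervalIntegrable s hs t ht).sub (hX₁.intervalIntegrable s hs t ht)).norm.const_mul N
  have hu : ∀ τ ∈ Icc s t, u τ ≤ N + ∫ σ in s..τ, g σ * u σ := fun τ hτ => by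
    have hτI : τ ∈ I := hI.out hs ht hτ
    have hX₂τ : ‖X₂ τ s‖ ≤ Real.exp (-ν * (τ - s)) * (N + ∫ σ in s..τ, g σ * u σ) := by
      linarith [norm_le_norm_sub_add (X₂ τ s) (X₁ τ s), hbound s hs τ hτI hτ.1,
        hX₁.norm_sub_le_exp_mul_integral hX₂ hI hbound hs hτI hτ.1]
    rwa [neg_mul, Real.exp_neg, ← div_eq_inv_mul, le_div_iff₀' (Real.exp_pos _)] at hX₂τ
  have hgronwall : ∫ τ in s..t, g τ * u τ ≤ N * (Real.exp (∫ τ in s..t, g τ) - 1) :=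
    integral_mul_le_of_le_add_integral_mul hst hg
      (hX₁.intervalIntegrable_norm_sub_mul hX₂ hI hs ht)
      (fun _ _ => mul_nonneg hN (norm_nonneg _)) hu
  calc ‖X₂ t s - X₁ t s‖ ≤ Real.exp (-ν * (t - s)) * ∫ τ in s..t, g τ * u τ :=
        hX₁.norm_sub_le_exp_mul_integral hX₂ hI hbound hs ht hst
    _ ≤ Real.exp (-ν * (t - s)) * (N * (Real.exp (∫ τ in s..t, g τ) - 1)) := by gcongr
    _ = _ := by
        rw [intervalIntegral.integral_const_mul]
        ring

theorem norm_evolutionPow_sub_le (hX₁ : IsEvolutionFamily I A₁ X₁)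
    (hX₂ : IsEvolutionFamily I A₂ X₂) (hI : I.OrdConnected) {ε : Bool}
    (hbound : ∀ s ∈ I, ∀ t ∈ I, s ≤ t →
      ‖evolutionPow X₁ ε t s‖ ≤ N * Real.exp (-ν * (t - s)))
    (hs : s ∈ I) (ht : t ∈ I) (hst : s ≤ t) :
    ‖evolutionPow X₂ ε t s - evolutionPow X₁ ε t s‖ ≤
      N * Real.exp (-ν * (t - s)) * (Real.exp (N * ∫ τ in s..t, ‖A₂ τ - A₁ τ‖) - 1) := by
  cases ε with
  | true => exact hX₁.norm_sub_le hX₂ hI hbound hs ht hst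
  | false =>
    simp only [evolutionPow, Bool.false_eq_true, if_false] at hbound ⊢
    have hbound_neg : ∀ s ∈ Neg.neg ⁻¹' I, ∀ t ∈ Neg.neg ⁻¹' I, s ≤ t →
        ‖X₁ (-t) (-s)‖ ≤ N * Real.exp (-ν * (t - s)) := fun s hs t ht hst => by
      simpa only [neg_sub_neg] using hbound _ ht _ hs (neg_le_neg hst)
    have hmem : ∀ {x}, x ∈ I → -x ∈ Neg.neg ⁻¹' I := fun hx => by
      rwa [mem_preimage, neg_neg]
    have hreversed := hX₁.comp_neg.norm_sub_le hX₂.comp_neg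
      (hI.preimage_anti fun _ _ => neg_le_neg) hbound_neg (hmem ht) (hmem hs) (neg_le_neg hst)
    simp only [neg_neg, neg_sub_neg] at hreversed
    rw [integral_comp_neg fun τ => ‖A₁ τ - A₂ τ‖, neg_neg, neg_neg] at hreversed
    simpa only [norm_sub_rev (A₂ _)] using hreversed

end IsEvolutionFamily

end EvolutionFamily

theorem stmt6_general {R : Type*} [NormedRing R] [NormedAlgebra ℝ R] [CompleteSpace R]
    {I : Set ℝ} (hI : I.OrdConnected) {A₁ A₂ : ℝ → R} {X₁ X₂ : ℝ → ℝ → R}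
    (hX₁ : IsEvolutionFamily I A₁ X₁) (hX₂ : IsEvolutionFamily I A₂ X₂) {N ν : ℝ} {ε : Bool}
    (hbound : ∀ s ∈ I, ∀ t ∈ I, s ≤ t →
      ‖evolutionPow X₁ ε t s‖ ≤ N * Real.exp (-ν * (t - s))) :
    ∀ s ∈ I, ∀ t ∈ I, s ≤ t →
      ‖evolutionPow X₂ ε t s‖ ≤
        N * Real.exp (-ν * (t - s)) * Real.exp (N * ∫ τ in s..t, ‖A₂ τ - A₁ τ‖) ∧
      ‖evolutionPow X₂ ε t s - evolutionPow X₁ ε t s‖ ≤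
        N * Real.exp (-ν * (t - s)) * (Real.exp (N * ∫ τ in s..t, ‖A₂ τ - A₁ τ‖) - 1) := by
  intro s hs t ht hst
  have hdiff := hX₁.norm_evolutionPow_sub_le hX₂ hI hbound hs ht hst
  refine ⟨?_, hdiff⟩
  linarith [norm_le_norm_sub_add (evolutionPow X₂ ε t s) (evolutionPow X₁ ε t s),
    hbound s hs t ht hst]

/-- comparison lemma of Daleckii–Krein. -/
theorem stmt6 {E : Type*} [NormedAddCommGroup E] [NormedSpace ℝ E] [CompleteSpace E]
    (I : Set ℝ) (hI : I.OrdConnected) (A₁ A₂ : ℝ → E →L[ℝ] E)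
    (hA₁ : ∀ a ∈ I, ∀ b ∈ I, IntervalIntegrable A₁ volume a b)
    (hA₂ : ∀ a ∈ I, ∀ b ∈ I, IntervalIntegrable A₂ volume a b)
    (X₁ X₂ : ℝ → ℝ → E →L[ℝ] E)
    (hX₁ : IsEvolutionOperator I A₁ X₁) (hX₂ : IsEvolutionOperator I A₂ X₂)
    (N ν₁ : ℝ) (hN : 0 < N) (ε : Bool)
    (hb : ∀ s ∈ I, ∀ t ∈ I, s ≤ t → ‖evPow X₁ ε t s‖ ≤ N * Real.exp (-ν₁ * (t - s))) :
    ∀ s ∈ I, ∀ t ∈ I, s ≤ t →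
      ‖evPow X₂ ε t s‖ ≤
        N * Real.exp (-ν₁ * (t - s)) * Real.exp (N * ∫ τ in s..t, ‖A₂ τ - A₁ τ‖) ∧
      ‖evPow X₂ ε t s - evPow X₁ ε t s‖ ≤
        N * Real.exp (-ν₁ * (t - s)) * (Real.exp (N * ∫ τ in s..t, ‖A₂ τ - A₁ τ‖) - 1) := by
  exact stmt6_general hI (hX₁.isEvolutionFamily hA₁) (hX₂.isEvolutionFamily hA₂) hb
end
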